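/- Let g be holomorphic on the unit disc D and suppose either (1 < p ≤ 2 and 0 < s ≤ 1) or (2 < p < ∞ and 1 − 2/p < s ≤ 1). Then the operator I_g maps the Besov space B^p into Q_s if and only if g ∈ H^∞. -/

import Mathlib

open MeasureTheory Metric Complex Real Filter Set

noncomputable section

/-- `f` is holomorphic on the open unit disc. -/
def HolOn (f : ℂ → ℂ) : Prop := DifferentiableOn ℂ f (Metric.ball (0:ℂ) 1)

/-- The normalized Lebesgue area measure on `ℂ` (so the unit disc has total mass 1). -/
def dA : Measure ℂ := (ENNReal.ofReal π)⁻¹ • volume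

/-- Bounded holomorphic functions on the unit disc. -/
def Hinf : Set (ℂ → ℂ) :=
  {f | HolOn f ∧ ∃ C : ℝ, ∀ z ∈ Metric.ball (0:ℂ) 1, ‖f z‖ ≤ C}

/-- The Bloch space. -/
def Bloch : Set (ℂ → ℂ) :=
  {f | HolOn f ∧ ∃ C : ℝ, ∀ z ∈ Metric.ball (0:ℂ) 1,
      (1 - ‖z‖ ^ 2) * ‖deriv f z‖ ≤ C}

/-- The little Bloch space: `(1-|z|²)|f'(z)| → 0` as `|z| → 1⁻`. -/
def littleBloch : Set (ℂ → ℂ) :=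
  {f | HolOn f ∧ ∀ ε : ℝ, 0 < ε → ∃ r : ℝ, r < 1 ∧ ∀ z ∈ Metric.ball (0:ℂ) 1,
      r < ‖z‖ → (1 - ‖z‖ ^ 2) * ‖deriv f z‖ < ε}

/-- The `α`-logarithmic Bloch space. -/
def BlochLog (α : ℝ) : Set (ℂ → ℂ) :=
  {f | HolOn f ∧ ∃ C : ℝ, ∀ z ∈ Metric.ball (0:ℂ) 1,
      (1 - ‖z‖ ^ 2) * (Real.log (2 / (1 - ‖z‖ ^ 2))) ^ α *
        ‖deriv f z‖ ≤ C}

/-- The Besov space `B¹`: holomorphic `f` with `∫_D |f''| dA < ∞`. -/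
def Besov1 : Set (ℂ → ℂ) :=
  {f | HolOn f ∧ ∫⁻ z in Metric.ball (0:ℂ) 1,
      ENNReal.ofReal (‖deriv (deriv f) z‖) ∂dA < ⊤}

/-- The Besov space `Bᵖ` (`1 < p < ∞`): `∫_D (1-|z|)^(p-2) |f'(z)|^p dA(z) < ∞`. -/
def Besov (p : ℝ) : Set (ℂ → ℂ) :=
  {f | HolOn f ∧ ∫⁻ z in Metric.ball (0:ℂ) 1,
      ENNReal.ofReal ((1 - ‖z‖) ^ (p - 2) * ‖deriv f z‖ ^ p) ∂dA < ⊤}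

open scoped Classical in
/-- The Besov space `Bᵖ` for all `1 ≤ p < ∞` (with the special definition at `p = 1`). -/
def BesovFull (p : ℝ) : Set (ℂ → ℂ) := if p = 1 then Besov1 else Besov p

/-- The Möbius transformation `φ_a(z) = (a-z)/(1 - conj a · z)`. -/
def phi (a z : ℂ) : ℂ := (a - z) / (1 - (starRingEnd ℂ) a * z)

/-- The space `Q_s`. -/
def Qs (s : ℝ) : Set (ℂ → ℂ) :=
  {f | HolOn f ∧ ⨆ a ∈ Metric.ball (0:ℂ) 1, ∫⁻ z in Metric.ball (0:ℂ) 1,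
      ENNReal.ofReal (‖deriv f z‖ ^ 2 *
        (1 - ‖phi a z‖ ^ 2) ^ s) ∂dA < ⊤}

/-- The space `Q_{s,log,α}`. -/
def QsLog (s α : ℝ) : Set (ℂ → ℂ) :=
  {f | HolOn f ∧ ⨆ a ∈ Metric.ball (0:ℂ) 1,
      (ENNReal.ofReal ((Real.log (2 / (1 - ‖a‖))) ^ (2 * α)) *
        ∫⁻ z in Metric.ball (0:ℂ) 1,
          ENNReal.ofReal (‖deriv f z‖ ^ 2 *
            (1 - ‖phi a z‖ ^ 2) ^ s) ∂dA) < ⊤}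

/-- The Volterra operator `T_g(f)(z) = ∫_0^z g'(ξ) f(ξ) dξ` (along the segment from 0 to z). -/
def Tg (g f : ℂ → ℂ) : ℂ → ℂ :=
  fun z => z * ∫ t in (0:ℝ)..1, deriv g ((t : ℂ) * z) * f ((t : ℂ) * z)

/-- The companion operator `I_g(f)(z) = ∫_0^z g(ξ) f'(ξ) dξ` (along the segment from 0 to z). -/
def Ig (g f : ℂ → ℂ) : ℂ → ℂ :=
  fun z => z * ∫ t in (0:ℝ)..1, g ((t : ℂ) * z) * deriv f ((t : ℂ) * z)

/-- The multiplication operator `M_g(f) = g · f`. -/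
def Mg (g f : ℂ → ℂ) : ℂ → ℂ := fun z => g z * f z

/-- `T` maps `X` into `Y`. -/
def MapsInto (T : (ℂ → ℂ) → (ℂ → ℂ)) (X Y : Set (ℂ → ℂ)) : Prop :=
  ∀ f ∈ X, T f ∈ Y

/-- The Hardy space `H^q`. -/
def Hardy (q : ℝ) : Set (ℂ → ℂ) :=
  {f | HolOn f ∧ ∃ C : ℝ, ∀ r : ℝ, 0 < r → r < 1 →
      (1 / (2 * π)) * ∫ t in (0:ℝ)..(2 * π),
        ‖f ((r : ℂ) * Complex.exp ((t : ℂ) * Complex.I))‖ ^ q ≤ C}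

/-- An inner function: bounded holomorphic with radial boundary values of modulus 1 a.e. -/
def IsInner (g : ℂ → ℂ) : Prop :=
  g ∈ Hinf ∧ ∀ᵐ t : ℝ ∂(volume.restrict (Set.Ioc (0:ℝ) (2 * π))),
    Filter.Tendsto (fun r : ℝ => ‖g ((r : ℂ) * Complex.exp ((t : ℂ) * Complex.I))‖)
      (nhdsWithin 1 (Set.Iio 1)) (nhds 1)

/-- `X` has the f-property (division by inner functions). -/
def FProperty (X : Set (ℂ → ℂ)) : Prop :=
  ∀ h ∈ X, ∀ g : ℂ → ℂ, IsInner g →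
    (fun z => h z / g z) ∈ Hardy 1 → (fun z => h z / g z) ∈ X

/-- The space of multipliers `M(X,Y)`. -/
def Mult (X Y : Set (ℂ → ℂ)) : Set (ℂ → ℂ) :=
  {g | HolOn g ∧ ∀ f ∈ X, (fun z => g z * f z) ∈ Y}

end

/-!
Write `f# = (1 - |z|²) |f'|` and `dλ = (1 - |z|²)⁻² dA`. Both are Möbius invariant: `λ` is
preserved by every `φ_a` and `(f ∘ φ_a)# = f# ∘ φ_a`. In these terms `f ∈ Bᵖ` means `f# ∈ Lᵖ(λ)`,
and `f ∈ Q_s` means that `∫ (f#)² (1 - |φ_a|²)ˢ dλ` is bounded in `a`. The sub-mean value property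
at `0`, transported by `φ_b`, bounds `f#` on the disc for `f` in either space; hence `Bᵖ` grows
with `p`, and Hölder's inequality gives `Bᵖ ⊆ Q_s`. Since `(I_g f)# = |g| f#`, bounded `g` map `Bᵖ`
into `Q_s`.

Conversely, let `g` be unbounded along `(b_n)`. For `c ∈ ℓ¹` the function `f = ∑ c_n φ_{b_n}` lies
in `Bᵖ`, so `(I_g f)#` is bounded. The functionals `c ↦ (1 - |b_m|²) (I_g f)'(b_m)` on `ℓ¹` are then
pointwise bounded, hence uniformly bounded, but the `m`-th one sends the `m`-th unit vector to a
number of modulus `|g(b_m)|`.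
-/

open scoped ENNReal ComplexConjugate

local notation "𝔻" => ball (0 : ℂ) 1

section Jensen

variable {α ι : Type*} [MeasurableSpace α] {μ : Measure α} {q : ℝ}

lemma rpow_lintegral_le_mul_lintegral_rpow {f : α → ℝ≥0∞} (hf : AEMeasurable f μ) (hq : 1 ≤ q) :
    (∫⁻ x, f x ∂μ) ^ q ≤ μ univ ^ (q - 1) * ∫⁻ x, f x ^ q ∂μ := by
  rcases hq.eq_or_lt with rfl | hq
  · simp
  have holder := ENNReal.lintegral_mul_le_Lp_mul_Lq μ (Real.HolderConjugate.conjExponent hq) hf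
    (g := fun _ => 1) aemeasurable_const
  simp only [Pi.mul_apply, mul_one, ENNReal.one_rpow, lintegral_one] at holder
  have hq0 : 0 < q := by linarith
  have hexp : 1 / q.conjExponent * q = q - 1 := by
    rw [Real.conjExponent]
    field_simp
  calc (∫⁻ x, f x ∂μ) ^ q
      ≤ ((∫⁻ x, f x ^ q ∂μ) ^ (1 / q) * μ univ ^ (1 / q.conjExponent)) ^ q := by gcongr
    _ = μ univ ^ (q - 1) * ∫⁻ x, f x ^ q ∂μ := by
      rw [ENNReal.mul_rpow_of_nonneg _ _ hq0.le, ← ENNReal.rpow_mul, ← ENNReal.rpow_mul, hexp,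
        one_div_mul_cancel hq0.ne', ENNReal.rpow_one, mul_comm]

lemma rpow_laverage_le_laverage_rpow [IsFiniteMeasure μ] {f : α → ℝ≥0∞} (hf : AEMeasurable f μ)
    (hq : 1 ≤ q) : (⨍⁻ x, f x ∂μ) ^ q ≤ ⨍⁻ x, f x ^ q ∂μ := by
  rcases eq_zero_or_neZero μ with rfl | _
  · simp [laverage_zero_measure, zero_lt_one.trans_le hq]
  · rw [laverage, laverage]
    simpa only [measure_univ, ENNReal.one_rpow, one_mul] using
      rpow_lintegral_le_mul_lintegral_rpow (μ := (μ univ)⁻¹ • μ) (hf.smul_measure _) hq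

lemma rpow_tsum_mul_le (c x : ι → ℝ≥0∞) (hq : 1 ≤ q) :
    (∑' i, c i * x i) ^ q ≤ (∑' i, c i) ^ (q - 1) * ∑' i, c i * x i ^ q := by
  let _ : MeasurableSpace ι := ⊤
  have jensen := rpow_lintegral_le_mul_lintegral_rpow
    (μ := Measure.sum fun i => c i • Measure.dirac i) (measurable_from_top (f := x)).aemeasurable hq
  simpa [lintegral_sum_measure, lintegral_smul_measure] using jensen

lemma lintegral_rpow_tsum_mul_le [Countable ι] {c : ι → ℝ≥0∞} {F : ι → α → ℝ≥0∞} {K : ℝ≥0∞}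
    (hF : ∀ i, Measurable (F i)) (hq : 1 ≤ q) (hK : ∀ i, ∫⁻ x, F i x ^ q ∂μ ≤ K) :
    ∫⁻ x, (∑' i, c i * F i x) ^ q ∂μ ≤ (∑' i, c i) ^ q * K :=
  calc ∫⁻ x, (∑' i, c i * F i x) ^ q ∂μ
      ≤ ∫⁻ x, (∑' i, c i) ^ (q - 1) * ∑' i, c i * F i x ^ q ∂μ :=
        lintegral_mono fun x => rpow_tsum_mul_le c (F · x) hq
    _ = (∑' i, c i) ^ (q - 1) * ∑' i, c i * ∫⁻ x, F i x ^ q ∂μ := by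
        rw [lintegral_const_mul _ (by fun_prop), lintegral_tsum fun i => by fun_prop]
        simp_rw [lintegral_const_mul _ ((hF _).pow_const q)]
    _ ≤ (∑' i, c i) ^ (q - 1) * ∑' i, c i * K := by
        gcongr with i
        exact hK i
    _ = (∑' i, c i) ^ q * K := by
        rw [ENNReal.tsum_mul_right, ← mul_assoc]
        congr 1
        conv_rhs => rw [← sub_add_cancel q 1,
          ENNReal.rpow_add_of_nonneg _ _ (by linarith) zero_le_one, ENNReal.rpow_one]

end Jensen

section Comparison

lemma rpow_le_rpow_abs_mul_rpow {u v K : ℝ} (hu : 0 < u) (hv : 0 < v) (huv : u ≤ K * v)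
    (hvu : v ≤ K * u) (e : ℝ) : u ^ e ≤ K ^ |e| * v ^ e := by
  have hK : 0 < K := pos_of_mul_pos_left (hu.trans_le huv) hv.le
  rcases le_total 0 e with he | he
  · rw [abs_of_nonneg he, ← Real.mul_rpow hK.le hv.le]
    exact Real.rpow_le_rpow hu.le huv he
  · rw [abs_of_nonpos he, Real.rpow_neg hK.le, ← Real.inv_rpow hK.le,
      ← Real.mul_rpow (inv_nonneg.2 hK.le) hv.le]
    refine Real.rpow_le_rpow_of_nonpos (by positivity) ?_ he
    rwa [inv_mul_le_iff₀ hK]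

lemma setLIntegral_rpow_mul_lt_top_of_le_mul {α : Type*} [MeasurableSpace α] {μ : Measure α}
    {S : Set α} {u v w : α → ℝ} {K e : ℝ} (hS : MeasurableSet S) (hu : ∀ x ∈ S, 0 < u x)
    (hv : ∀ x ∈ S, 0 < v x) (huv : ∀ x ∈ S, u x ≤ K * v x) (hvu : ∀ x ∈ S, v x ≤ K * u x)
    (hw : ∀ x ∈ S, 0 ≤ w x) (h : ∫⁻ x in S, ENNReal.ofReal (v x ^ e * w x) ∂μ < ∞) :
    ∫⁻ x in S, ENNReal.ofReal (u x ^ e * w x) ∂μ < ∞ :=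
  calc ∫⁻ x in S, ENNReal.ofReal (u x ^ e * w x) ∂μ
      ≤ ∫⁻ x in S, ENNReal.ofReal (K ^ |e|) * ENNReal.ofReal (v x ^ e * w x) ∂μ :=
        setLIntegral_mono' hS fun x hx => by
          have hvw : 0 ≤ v x ^ e * w x := mul_nonneg (Real.rpow_nonneg (hv x hx).le e) (hw x hx)
          rw [← ENNReal.ofReal_mul' hvw, ← mul_assoc]
          exact ENNReal.ofReal_le_ofReal <| mul_le_mul_of_nonneg_right
            (rpow_le_rpow_abs_mul_rpow (hu x hx) (hv x hx) (huv x hx) (hvu x hx) e) (hw x hx)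
    _ < ∞ := by
        rw [lintegral_const_mul' _ _ ENNReal.ofReal_ne_top]
        exact ENNReal.mul_lt_top ENNReal.ofReal_lt_top h

end Comparison

section UniformBoundedness

lemma exists_norm_le_of_forall_summable {𝕜 ι κ : Type*} [RCLike 𝕜] {w : κ → ι → 𝕜}
    (hw : ∀ k, BddAbove (range fun i => ‖w k i‖))
    (hbdd : ∀ c : ι → 𝕜, Summable (fun i => ‖c i‖) → ∃ M, ∀ k, ‖∑' i, c i * w k i‖ ≤ M) :
    ∃ C, ∀ k i, ‖w k i‖ ≤ C := by
  classical
  let L (k : κ) : lp (fun _ : ι => 𝕜) 1 →L[𝕜] 𝕜 :=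
    lp.dualPairing ∞ 1 (fun _ => ContinuousLinearMap.mul 𝕜 𝕜) (K := 1) (by simp)
      ⟨w k, memℓp_infty (hw k)⟩
  have L_apply (k : κ) (x : lp (fun _ : ι => 𝕜) 1) : L k x = ∑' i, x i * w k i :=
    tsum_congr fun i => mul_comm _ _
  obtain ⟨C, hC⟩ : ∃ C, ∀ k, ‖L k‖ ≤ C := banach_steinhaus fun x => by
    obtain ⟨M, hM⟩ := hbdd x (by simpa using (lp.memℓp x).summable (by simp))
    exact ⟨M, fun k => by simpa only [L_apply] using hM k⟩
  refine ⟨C, fun k i => ?_⟩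
  have L_single : L k (lp.single 1 i (1 : 𝕜)) = w k i := by
    rw [L_apply, tsum_eq_single i fun j hj => by rw [lp.single_apply_ne _ _ _ hj, zero_mul],
      lp.single_apply_self, one_mul]
  calc ‖w k i‖ = ‖L k (lp.single 1 i (1 : 𝕜))‖ := by rw [L_single]
    _ ≤ ‖L k‖ * ‖(lp.single 1 i (1 : 𝕜) : lp (fun _ : ι => 𝕜) 1)‖ := (L k).le_opNorm _
    _ = ‖L k‖ := by rw [lp.norm_single (by simp), norm_one, mul_one]
    _ ≤ C := hC k

end UniformBoundedness

section MeanValue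

variable {F : ℂ → ℂ} {r q : ℝ}

lemma enorm_zero_rpow_le_laverage_circle (hF : DifferentiableOn ℂ F (ball 0 r))
    (hFm : Measurable F) (hq : 1 ≤ q) {z : ℂ} (hz : z ∈ ball 0 r) :
    ‖F 0‖ₑ ^ q ≤ ⨍⁻ θ in Ioc 0 (2 * π), ‖F (circleMap 0 1 θ * z)‖ₑ ^ q ∂volume := by
  rw [mem_ball_zero_iff] at hz
  have maps : MapsTo (fun w => w * z) (closedBall 0 1) (ball 0 r) := fun w hw => by
    rw [mem_closedBall_zero_iff] at hw
    rw [mem_ball_zero_iff, norm_mul]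
    exact (mul_le_of_le_one_left (norm_nonneg z) hw).trans_lt hz
  have diff : DiffContOnCl ℂ (fun w => F (w * z)) (ball 0 |1|) := by
    rw [abs_one]
    refine (hF.comp (by fun_prop) (maps.mono_left ?_)).diffContOnCl
    exact closure_ball_subset_closedBall
  have mean : ‖F 0‖ₑ ≤ ⨍⁻ θ in Ioc 0 (2 * π), ‖F (circleMap 0 1 θ * z)‖ₑ ∂volume := by
    have := diff.circleAverage
    rw [Real.circleAverage_eq_intervalAverage, uIoc_of_le two_pi_pos.le, zero_mul] at this
    rw [← this]
    exact enorm_integral_le_lintegral_enorm _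
  calc ‖F 0‖ₑ ^ q ≤ (⨍⁻ θ in Ioc 0 (2 * π), ‖F (circleMap 0 1 θ * z)‖ₑ ∂volume) ^ q := by gcongr
    _ ≤ ⨍⁻ θ in Ioc 0 (2 * π), ‖F (circleMap 0 1 θ * z)‖ₑ ^ q ∂volume :=
        rpow_laverage_le_laverage_rpow (by fun_prop) hq

lemma enorm_zero_rpow_mul_le_setLIntegral {μ : Measure ℂ} [SFinite μ]
    (hμ : ∀ u : Circle, MeasurePreserving (fun z => (u : ℂ) * z) μ μ)
    (hF : DifferentiableOn ℂ F (ball 0 r)) (hFm : Measurable F) (hq : 1 ≤ q) :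
    ‖F 0‖ₑ ^ q * μ (ball 0 r) ≤ ∫⁻ z in ball 0 r, ‖F z‖ₑ ^ q ∂μ := by
  have rotate (θ : ℝ) : ∫⁻ z in ball 0 r, ‖F (circleMap 0 1 θ * z)‖ₑ ^ q ∂μ =
      ∫⁻ z in ball 0 r, ‖F z‖ₑ ^ q ∂μ := by
    have preimage_ball : (fun z => (Circle.exp θ : ℂ) * z) ⁻¹' ball 0 r = ball 0 r := by
      ext z
      simp
    have := (hμ (Circle.exp θ)).setLIntegral_comp_preimage (s := ball 0 r) measurableSet_ball
      (f := fun z => ‖F z‖ₑ ^ q) (by fun_prop)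
    rw [preimage_ball] at this
    simpa [circleMap] using this
  calc ‖F 0‖ₑ ^ q * μ (ball 0 r) = ∫⁻ _ in ball 0 r, ‖F 0‖ₑ ^ q ∂μ := (setLIntegral_const ..).symm
    _ ≤ ∫⁻ z in ball 0 r, (⨍⁻ θ in Ioc 0 (2 * π), ‖F (circleMap 0 1 θ * z)‖ₑ ^ q ∂volume) ∂μ :=
        setLIntegral_mono' measurableSet_ball fun z hz =>
          enorm_zero_rpow_le_laverage_circle hF hFm hq hz
    _ = ⨍⁻ θ in Ioc 0 (2 * π), ∫⁻ z in ball 0 r, ‖F (circleMap 0 1 θ * z)‖ₑ ^ q ∂μ ∂volume :=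
        lintegral_lintegral_swap (by fun_prop)
    _ = ∫⁻ z in ball 0 r, ‖F z‖ₑ ^ q ∂μ := by
        simp_rw [rotate]
        exact setLAverage_const (by simp [pi_pos]) measure_Ioc_lt_top.ne _

end MeanValue

section HyperbolicGeometry

variable {a z : ℂ}

instance isAddHaarMeasure_dA : dA.IsAddHaarMeasure :=
  Measure.IsAddHaarMeasure.smul _ (by simp) (by simp [Real.pi_pos])

lemma measurePreserving_circle_mul_dA (u : Circle) :
    MeasurePreserving (fun z => (u : ℂ) * z) dA dA :=
  (LinearIsometryEquiv.measurePreserving (rotation u)).smul_measure _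

lemma one_sub_norm_sq_pos (hz : z ∈ 𝔻) : 0 < 1 - ‖z‖ ^ 2 := by
  rw [mem_ball_zero_iff] at hz
  nlinarith [norm_nonneg z]

/-- The conformal weight `1 - |z|²` of the disc. The truncation `ENNReal.ofReal` makes it vanish
outside the disc. -/
noncomputable def discWeight (z : ℂ) : ℝ≥0∞ := ENNReal.ofReal (1 - ‖z‖ ^ 2)

@[fun_prop]
lemma measurable_discWeight : Measurable discWeight := by
  unfold discWeight
  fun_prop

lemma discWeight_ne_zero (hz : z ∈ 𝔻) : discWeight z ≠ 0 :=
  (ENNReal.ofReal_pos.2 (one_sub_norm_sq_pos hz)).ne'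

lemma discWeight_rpow (hz : z ∈ 𝔻) (t : ℝ) :
    discWeight z ^ t = ENNReal.ofReal ((1 - ‖z‖ ^ 2) ^ t) :=
  ENNReal.ofReal_rpow_of_pos (one_sub_norm_sq_pos hz)

lemma discWeight_ne_top (z : ℂ) : discWeight z ≠ ∞ := ENNReal.ofReal_ne_top

@[fun_prop]
lemma measurable_phi (a : ℂ) : Measurable (phi a) := by
  unfold phi
  fun_prop

lemma one_sub_conj_mul_ne_zero (ha : a ∈ 𝔻) (hz : z ∈ 𝔻) : 1 - conj a * z ≠ 0 := by
  rw [mem_ball_zero_iff] at ha hz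
  intro h
  have : ‖a‖ * ‖z‖ = 1 := by simpa using congrArg norm (sub_eq_zero.1 h).symm
  nlinarith [norm_nonneg a, norm_nonneg z]

lemma one_sub_norm_phi_sq (ha : a ∈ 𝔻) (hz : z ∈ 𝔻) :
    1 - ‖phi a z‖ ^ 2 = (1 - ‖a‖ ^ 2) * (1 - ‖z‖ ^ 2) / ‖1 - conj a * z‖ ^ 2 := by
  have := norm_pos_iff.2 (one_sub_conj_mul_ne_zero ha hz)
  rw [phi, norm_div, div_pow, eq_div_iff (by positivity), sub_mul, one_mul,
    div_mul_cancel₀ _ (by positivity)]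
  simp only [← Complex.normSq_eq_norm_sq, Complex.normSq_apply]
  simp
  ring

lemma mapsTo_phi (ha : a ∈ 𝔻) : MapsTo (phi a) 𝔻 𝔻 := fun z hz => by
  have pos : 0 < 1 - ‖phi a z‖ ^ 2 := by
    rw [one_sub_norm_phi_sq ha hz]
    have := norm_pos_iff.2 (one_sub_conj_mul_ne_zero ha hz)
    have := one_sub_norm_sq_pos ha
    have := one_sub_norm_sq_pos hz
    positivity
  rw [mem_ball_zero_iff]
  nlinarith [norm_nonneg (phi a z)]

lemma phi_zero_right (a : ℂ) : phi a 0 = a := by simp [phi]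

lemma phi_self (a : ℂ) : phi a a = 0 := by simp [phi]

lemma phi_phi (ha : a ∈ 𝔻) (hz : z ∈ 𝔻) : phi a (phi a z) = z := by
  have hz' := one_sub_conj_mul_ne_zero ha hz
  have hphi := one_sub_conj_mul_ne_zero ha (mapsTo_phi ha hz)
  have cancel : phi a z * (1 - conj a * z) = a - z := div_mul_cancel₀ _ hz'
  rw [phi, div_eq_iff hphi]
  linear_combination -cancel

lemma bijOn_phi (ha : a ∈ 𝔻) : BijOn (phi a) 𝔻 𝔻 :=
  InvOn.bijOn ⟨fun _ => phi_phi ha, fun _ => phi_phi ha⟩ (mapsTo_phi ha) (mapsTo_phi ha)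

lemma hasDerivAt_phi (ha : a ∈ 𝔻) (hz : z ∈ 𝔻) :
    HasDerivAt (phi a) (-(1 - ‖a‖ ^ 2 : ℝ) / (1 - conj a * z) ^ 2) z := by
  have num : HasDerivAt (fun z => a - z) (-1) z := (hasDerivAt_id z).const_sub a
  have den : HasDerivAt (fun z => 1 - conj a * z) (-conj a) z := by
    simpa using ((hasDerivAt_id z).const_mul (conj a)).const_sub 1
  refine (num.div den (one_sub_conj_mul_ne_zero ha hz)).congr_deriv ?_
  push_cast
  rw [← Complex.conj_mul']
  ring

lemma holOn_phi (ha : a ∈ 𝔻) : HolOn (phi a) := fun _ hz =>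
  (hasDerivAt_phi ha hz).differentiableAt.differentiableWithinAt

lemma one_sub_norm_sq_mul_norm_deriv_phi (ha : a ∈ 𝔻) (hz : z ∈ 𝔻) :
    (1 - ‖z‖ ^ 2) * ‖deriv (phi a) z‖ = 1 - ‖phi a z‖ ^ 2 := by
  rw [(hasDerivAt_phi ha hz).deriv, one_sub_norm_phi_sq ha hz, norm_div, norm_neg, norm_pow,
    Complex.norm_real, Real.norm_of_nonneg (one_sub_norm_sq_pos ha).le]
  ring

lemma discWeight_mul_enorm_deriv_phi (ha : a ∈ 𝔻) (hz : z ∈ 𝔻) :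
    discWeight z * ‖deriv (phi a) z‖ₑ = discWeight (phi a z) := by
  rw [discWeight, discWeight, ← ofReal_norm, ← ENNReal.ofReal_mul' (norm_nonneg _),
    one_sub_norm_sq_mul_norm_deriv_phi ha hz]

/-- The Möbius-invariant measure `dλ(z) = (1 - |z|²)⁻² dA(z)` on the disc. -/
noncomputable def hyperbolicMeasure : Measure ℂ :=
  (dA.restrict 𝔻).withDensity fun z => (discWeight z ^ 2)⁻¹

lemma ae_hyperbolicMeasure_mem_ball : ∀ᵐ z ∂hyperbolicMeasure, z ∈ 𝔻 :=
  (withDensity_absolutelyContinuous _ _).ae_le (ae_restrict_mem measurableSet_ball)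

lemma abs_det_restrictScalars_toSpanSingleton (c : ℂ) :
    |((ContinuousLinearMap.toSpanSingleton ℂ c).restrictScalars ℝ : ℂ →L[ℝ] ℂ).det| = ‖c‖ ^ 2 := by
  simp [ContinuousLinearMap.det, LinearMap.det_restrictScalars, Algebra.norm_complex_apply,
    Complex.normSq_eq_norm_sq]

lemma setLIntegral_hyperbolicMeasure {s : Set ℂ} (hs : MeasurableSet s) (F : ℂ → ℝ≥0∞) :
    ∫⁻ z in s, F z ∂hyperbolicMeasure = ∫⁻ z in s ∩ 𝔻, (discWeight z ^ 2)⁻¹ * F z ∂dA := by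
  rw [hyperbolicMeasure, restrict_withDensity hs, Measure.restrict_restrict hs]
  refine lintegral_withDensity_eq_lintegral_mul_non_measurable _ (by fun_prop) ?_ F
  filter_upwards [ae_restrict_mem (hs.inter measurableSet_ball)] with z hz
  exact ENNReal.inv_lt_top.2 (ENNReal.pow_pos (pos_iff_ne_zero.2 (discWeight_ne_zero hz.2)) 2)

lemma lintegral_hyperbolicMeasure (F : ℂ → ℝ≥0∞) :
    ∫⁻ z, F z ∂hyperbolicMeasure = ∫⁻ z in 𝔻, (discWeight z ^ 2)⁻¹ * F z ∂dA := by
  simpa using setLIntegral_hyperbolicMeasure MeasurableSet.univ F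

lemma measurePreserving_phi (ha : a ∈ 𝔻) :
    MeasurePreserving (phi a) hyperbolicMeasure hyperbolicMeasure := by
  refine ⟨measurable_phi a, Measure.ext fun s hs => ?_⟩
  have image : phi a '' (phi a ⁻¹' s ∩ 𝔻) = s ∩ 𝔻 := by
    rw [image_preimage_inter, (bijOn_phi ha).image_eq]
  have change := lintegral_image_eq_lintegral_abs_det_fderiv_mul dA
    ((measurable_phi a hs).inter measurableSet_ball)
    (fun z hz => ((hasDerivAt_phi ha hz.2).differentiableAt.hasDerivAt.hasFDerivAt.restrictScalars
      ℝ).hasFDerivWithinAt)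
    ((bijOn_phi ha).injOn.mono inter_subset_right) (fun z => (discWeight z ^ 2)⁻¹)
  rw [Measure.map_apply (measurable_phi a) hs, ← setLIntegral_one, ← setLIntegral_one,
    setLIntegral_hyperbolicMeasure hs, setLIntegral_hyperbolicMeasure (measurable_phi a hs)]
  simp only [mul_one]
  rw [← image, change]
  refine setLIntegral_congr_fun ((measurable_phi a hs).inter measurableSet_ball) fun z hz => ?_
  have deriv_ne_zero : ‖deriv (phi a) z‖ₑ ≠ 0 := right_ne_zero_of_mul <|
    discWeight_mul_enorm_deriv_phi ha hz.2 ▸ discWeight_ne_zero (mapsTo_phi ha hz.2)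
  rw [abs_det_restrictScalars_toSpanSingleton, ENNReal.ofReal_pow (norm_nonneg _), ofReal_norm,
    ← discWeight_mul_enorm_deriv_phi ha hz.2, mul_pow,
    ENNReal.mul_inv (by simp) (by simp [discWeight_ne_top]), mul_left_comm,
    ENNReal.mul_inv_cancel (by simpa using deriv_ne_zero) (by simp), mul_one]

lemma integrableOn_mul_one_sub_sq_rpow {t : ℝ} (ht : -1 < t) :
    IntegrableOn (fun y : ℝ => y * (1 - y ^ 2) ^ t) (Ioo 0 1) := by
  have pos (x : ℝ) (hx : x ∈ Ioo (0 : ℝ) 1) : 0 < 1 - x ^ 2 := by nlinarith [hx.1, hx.2]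
  refine (intervalIntegral.integrableOn_deriv_of_nonneg
    (g := fun y => -(1 - y ^ 2) ^ (t + 1) / (2 * (t + 1))) ?_ (fun x hx => ?_)
    fun x hx => ?_).mono_set Ioo_subset_Ioc_self
  · exact ((ContinuousOn.rpow_const (by fun_prop) fun x _ => Or.inr (by linarith)).neg).div_const _
  · have inner : HasDerivAt (fun y : ℝ => 1 - y ^ 2) (-(2 * x)) x := by
      simpa using (hasDerivAt_pow 2 x).const_sub 1
    refine ((inner.rpow_const (Or.inl (pos x hx).ne')).neg.div_const _).congr_deriv ?_
    have : t + 1 ≠ 0 := by linarith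
    rw [add_sub_cancel_right]
    field_simp
  · exact mul_nonneg hx.1.le (Real.rpow_nonneg (pos x hx).le _)

lemma lintegral_discWeight_rpow_lt_top {t : ℝ} (ht : 1 < t) :
    ∫⁻ z, discWeight z ^ t ∂hyperbolicMeasure < ∞ := by
  have integrable : IntegrableOn (fun z : ℂ => (1 - ‖z‖ ^ 2) ^ (t - 2)) 𝔻 dA := by
    rw [integrableOn_fun_norm_addHaar dA (f := fun y => (1 - y ^ 2) ^ (t - 2))]
    simpa using integrableOn_mul_one_sub_sq_rpow (by linarith : -1 < t - 2)
  rw [lintegral_hyperbolicMeasure]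
  refine (setLIntegral_congr_fun measurableSet_ball fun z hz => ?_).trans_lt
    integrable.lintegral_lt_top
  rw [← discWeight_rpow hz, ← ENNReal.rpow_two, ← ENNReal.rpow_neg,
    ← ENNReal.rpow_add _ _ (discWeight_ne_zero hz) (discWeight_ne_top z), neg_add_eq_sub]

lemma lintegral_discWeight_phi_rpow (ha : a ∈ 𝔻) (t : ℝ) :
    ∫⁻ z, discWeight (phi a z) ^ t ∂hyperbolicMeasure =
      ∫⁻ z, discWeight z ^ t ∂hyperbolicMeasure :=
  (measurePreserving_phi ha).lintegral_comp (f := fun z => discWeight z ^ t) (by fun_prop)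

end HyperbolicGeometry

section InvariantDerivative

variable {f : ℂ → ℂ} {a z : ℂ} {p s : ℝ}

/-- The Möbius-invariant derivative `(1 - |z|²) |f'(z)|` of a function on the disc. -/
noncomputable def invariantDeriv (f : ℂ → ℂ) (z : ℂ) : ℝ≥0∞ := discWeight z * ‖deriv f z‖ₑ

@[fun_prop]
lemma measurable_invariantDeriv (f : ℂ → ℂ) : Measurable (invariantDeriv f) := by
  unfold invariantDeriv
  fun_prop

lemma invariantDeriv_eq_ofReal (hz : z ∈ 𝔻) :
    invariantDeriv f z = ENNReal.ofReal ((1 - ‖z‖ ^ 2) * ‖deriv f z‖) := by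
  rw [invariantDeriv, discWeight, ← ofReal_norm, ENNReal.ofReal_mul (one_sub_norm_sq_pos hz).le]

lemma HolOn.comp_phi (hf : HolOn f) (ha : a ∈ 𝔻) : HolOn (f ∘ phi a) :=
  hf.comp (holOn_phi ha) (mapsTo_phi ha)

lemma invariantDeriv_comp_phi (hf : HolOn f) (ha : a ∈ 𝔻) (hz : z ∈ 𝔻) :
    invariantDeriv (f ∘ phi a) z = invariantDeriv f (phi a z) := by
  have hf' := hf.differentiableAt (isOpen_ball.mem_nhds (mapsTo_phi ha hz))
  rw [invariantDeriv, deriv_comp z hf' (hasDerivAt_phi ha hz).differentiableAt, enorm_mul,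
    mul_left_comm, discWeight_mul_enorm_deriv_phi ha hz, mul_comm, invariantDeriv]

lemma lintegral_invariantDeriv_rpow (hp : 0 ≤ p) :
    ∫⁻ z, invariantDeriv f z ^ p ∂hyperbolicMeasure =
      ∫⁻ z in 𝔻, ENNReal.ofReal ((1 - ‖z‖ ^ 2) ^ (p - 2) * ‖deriv f z‖ ^ p) ∂dA := by
  rw [lintegral_hyperbolicMeasure]
  refine setLIntegral_congr_fun measurableSet_ball fun z hz => ?_
  have hz' := one_sub_norm_sq_pos hz
  rw [ENNReal.ofReal_mul (by positivity), ← discWeight_rpow hz,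
    ← ENNReal.ofReal_rpow_of_nonneg (norm_nonneg _) hp, ofReal_norm, invariantDeriv,
    ENNReal.mul_rpow_of_nonneg _ _ hp, ← mul_assoc, ← ENNReal.rpow_two, ← ENNReal.rpow_neg,
    ← ENNReal.rpow_add _ _ (discWeight_ne_zero hz) (discWeight_ne_top z), neg_add_eq_sub]

lemma mem_Besov_iff (hp : 0 ≤ p) :
    f ∈ Besov p ↔ HolOn f ∧ ∫⁻ z, invariantDeriv f z ^ p ∂hyperbolicMeasure < ∞ := by
  have pos (z : ℂ) (hz : z ∈ 𝔻) : 0 < 1 - ‖z‖ := sub_pos.2 (mem_ball_zero_iff.1 hz)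
  have pos' (z : ℂ) (hz : z ∈ 𝔻) : 0 < 1 - ‖z‖ ^ 2 := one_sub_norm_sq_pos hz
  have le (z : ℂ) (hz : z ∈ 𝔻) : 1 - ‖z‖ ≤ 2 * (1 - ‖z‖ ^ 2) := by
    nlinarith [pos z hz, norm_nonneg z]
  have le' (z : ℂ) (hz : z ∈ 𝔻) : 1 - ‖z‖ ^ 2 ≤ 2 * (1 - ‖z‖) := by
    nlinarith [pos z hz, norm_nonneg z]
  rw [lintegral_invariantDeriv_rpow hp]
  have nonneg (z : ℂ) (_ : z ∈ 𝔻) : 0 ≤ ‖deriv f z‖ ^ p := by positivity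
  exact and_congr_right fun _ =>
    ⟨setLIntegral_rpow_mul_lt_top_of_le_mul measurableSet_ball pos' pos le' le nonneg,
      setLIntegral_rpow_mul_lt_top_of_le_mul measurableSet_ball pos pos' le le' nonneg⟩

lemma mem_Qs_iff :
    f ∈ Qs s ↔ HolOn f ∧ ⨆ a ∈ 𝔻,
      ∫⁻ z, invariantDeriv f z ^ 2 * discWeight (phi a z) ^ s ∂hyperbolicMeasure < ∞ := by
  refine and_congr_right fun _ => iff_of_eq (congrArg (· < ∞) (biSup_congr fun a ha => ?_))
  rw [lintegral_hyperbolicMeasure]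
  refine setLIntegral_congr_fun measurableSet_ball fun z hz => ?_
  have hz' := discWeight_ne_zero hz
  rw [ENNReal.ofReal_mul (by positivity), ← discWeight_rpow (mapsTo_phi ha hz),
    ENNReal.ofReal_pow (norm_nonneg _), ofReal_norm, invariantDeriv, mul_pow, ← mul_assoc,
    ← mul_assoc, ENNReal.inv_mul_cancel (by simpa) (by simp [discWeight_ne_top]), one_mul]

lemma mem_Bloch_iff :
    f ∈ Bloch ↔ HolOn f ∧ ∃ C ≠ ∞, ∀ z ∈ 𝔻, invariantDeriv f z ≤ C := by
  refine and_congr_right fun _ => ⟨fun ⟨C, hC⟩ => ⟨ENNReal.ofReal C, ENNReal.ofReal_ne_top,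
    fun z hz => ?_⟩, fun ⟨C, hC, h⟩ => ⟨C.toReal, fun z hz => ?_⟩⟩
  · rw [invariantDeriv_eq_ofReal hz]
    exact ENNReal.ofReal_le_ofReal (hC z hz)
  · rw [← ENNReal.ofReal_le_iff_le_toReal hC, ← invariantDeriv_eq_ofReal hz]
    exact h z hz

end InvariantDerivative

section Inclusions

variable {f : ℂ → ℂ} {b z : ℂ} {p q s : ℝ}

lemma one_le_four_thirds_mul_discWeight (hz : z ∈ ball (0 : ℂ) (1 / 2)) :
    1 ≤ 4 / 3 * discWeight z := by
  rw [mem_ball_zero_iff] at hz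
  have : ENNReal.ofReal (3 / 4) ≤ discWeight z :=
    ENNReal.ofReal_le_ofReal (by nlinarith [norm_nonneg z])
  calc (1 : ℝ≥0∞) = 4 / 3 * ENNReal.ofReal (3 / 4) := by
        rw [← ENNReal.toReal_eq_toReal_iff' (by simp) (by finiteness)]
        norm_num
    _ ≤ 4 / 3 * discWeight z := by gcongr

lemma invariantDeriv_zero_rpow_mul_le_setLIntegral (hf : HolOn f) (hq : 1 ≤ q) :
    invariantDeriv f 0 ^ q * dA (ball 0 (1 / 2)) ≤
      (4 / 3) ^ q * ∫⁻ z in ball 0 (1 / 2), invariantDeriv f z ^ q ∂hyperbolicMeasure := by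
  have half_subset : ball (0 : ℂ) (1 / 2) ⊆ 𝔻 := ball_subset_ball (by norm_num)
  have pointwise (z : ℂ) (hz : z ∈ ball (0 : ℂ) (1 / 2)) : ‖deriv f z‖ₑ ^ q ≤
      (4 / 3) ^ q * ((discWeight z ^ 2)⁻¹ * invariantDeriv f z ^ q) := by
    have weight_le_one : discWeight z ≤ 1 := by simp [discWeight, ENNReal.ofReal_le_one]
    calc ‖deriv f z‖ₑ ^ q ≤ (4 / 3 * invariantDeriv f z) ^ q := by
          gcongr
          rw [invariantDeriv, ← mul_assoc]
          exact le_mul_of_one_le_left' (one_le_four_thirds_mul_discWeight hz)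
      _ = (4 / 3) ^ q * invariantDeriv f z ^ q := ENNReal.mul_rpow_of_nonneg _ _ (by linarith)
      _ ≤ (4 / 3) ^ q * ((discWeight z ^ 2)⁻¹ * invariantDeriv f z ^ q) := by
          gcongr
          exact le_mul_of_one_le_left' (ENNReal.one_le_inv.2 (pow_le_one' weight_le_one 2))
  calc invariantDeriv f 0 ^ q * dA (ball 0 (1 / 2))
    _ = ‖deriv f 0‖ₑ ^ q * dA (ball 0 (1 / 2)) := by simp [invariantDeriv, discWeight]
    _ ≤ ∫⁻ z in ball 0 (1 / 2), ‖deriv f z‖ₑ ^ q ∂dA :=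
        enorm_zero_rpow_mul_le_setLIntegral measurePreserving_circle_mul_dA
          ((hf.deriv isOpen_ball).mono half_subset) (measurable_deriv f) hq
    _ ≤ ∫⁻ z in ball 0 (1 / 2),
          (4 / 3) ^ q * ((discWeight z ^ 2)⁻¹ * invariantDeriv f z ^ q) ∂dA :=
        setLIntegral_mono' measurableSet_ball pointwise
    _ = (4 / 3) ^ q * ∫⁻ z in ball 0 (1 / 2), invariantDeriv f z ^ q ∂hyperbolicMeasure := by
        rw [lintegral_const_mul _ (by fun_prop), setLIntegral_hyperbolicMeasure measurableSet_ball,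
          inter_eq_left.2 half_subset]

lemma invariantDeriv_rpow_mul_le_setLIntegral (hf : HolOn f) (hb : b ∈ 𝔻) (hq : 1 ≤ q) :
    invariantDeriv f b ^ q * dA (ball 0 (1 / 2)) ≤ (4 / 3) ^ q *
      ∫⁻ z in phi b ⁻¹' ball 0 (1 / 2), invariantDeriv f z ^ q ∂hyperbolicMeasure := by
  have half_subset : ball (0 : ℂ) (1 / 2) ⊆ 𝔻 := ball_subset_ball (by norm_num)
  have half_subset_preimage : ball 0 (1 / 2) ⊆ phi b ⁻¹' (phi b ⁻¹' ball 0 (1 / 2)) :=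
    fun z hz => by rwa [mem_preimage, mem_preimage, phi_phi hb (half_subset hz)]
  calc invariantDeriv f b ^ q * dA (ball 0 (1 / 2))
      = invariantDeriv (f ∘ phi b) 0 ^ q * dA (ball 0 (1 / 2)) := by
        rw [invariantDeriv_comp_phi hf hb (by simp), phi_zero_right]
    _ ≤ (4 / 3) ^ q * ∫⁻ z in ball 0 (1 / 2),
          invariantDeriv (f ∘ phi b) z ^ q ∂hyperbolicMeasure :=
        invariantDeriv_zero_rpow_mul_le_setLIntegral (hf.comp_phi hb) hq
    _ = (4 / 3) ^ q * ∫⁻ z in ball 0 (1 / 2),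
          invariantDeriv f (phi b z) ^ q ∂hyperbolicMeasure := by
        congr 1
        exact setLIntegral_congr_fun measurableSet_ball fun z hz => by
          simp only [invariantDeriv_comp_phi hf hb (half_subset hz)]
    _ ≤ (4 / 3) ^ q * ∫⁻ z in phi b ⁻¹' (phi b ⁻¹' ball 0 (1 / 2)),
          invariantDeriv f (phi b z) ^ q ∂hyperbolicMeasure := by
        gcongr
    _ = (4 / 3) ^ q *
          ∫⁻ z in phi b ⁻¹' ball 0 (1 / 2), invariantDeriv f z ^ q ∂hyperbolicMeasure := by
        rw [(measurePreserving_phi hb).setLIntegral_comp_preimage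
          (measurable_phi b measurableSet_ball) (f := fun z => invariantDeriv f z ^ q)
          (by fun_prop)]

lemma mem_Bloch_of_setLIntegral_le {K : ℝ≥0∞} (hf : HolOn f) (hq : 1 ≤ q) (hK : K ≠ ∞)
    (h : ∀ b ∈ 𝔻, ∫⁻ z in phi b ⁻¹' ball 0 (1 / 2), invariantDeriv f z ^ q ∂hyperbolicMeasure ≤ K) :
    f ∈ Bloch := by
  have hq0 : 0 < q := by linarith
  have half_ne_zero : dA (ball 0 (1 / 2)) ≠ 0 := (measure_ball_pos _ _ (by norm_num)).ne'
  have half_ne_top : dA (ball 0 (1 / 2)) ≠ ∞ := measure_ball_lt_top.ne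
  refine mem_Bloch_iff.2 ⟨hf, ((4 / 3) ^ q * K / dA (ball 0 (1 / 2))) ^ q⁻¹, ?_, fun b hb => ?_⟩
  · finiteness
  · rw [ENNReal.le_rpow_inv_iff hq0, ENNReal.le_div_iff_mul_le (.inl half_ne_zero)
      (.inl half_ne_top)]
    exact (invariantDeriv_rpow_mul_le_setLIntegral hf hb hq).trans (by gcongr; exact h b hb)

lemma Besov_subset_Bloch (hp : 1 ≤ p) : Besov p ⊆ Bloch := fun _ hf => by
  obtain ⟨hol, hf⟩ := (mem_Besov_iff (by linarith)).1 hf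
  exact mem_Bloch_of_setLIntegral_le hol hp hf.ne fun _ _ => setLIntegral_le_lintegral _ _

lemma Qs_subset_Bloch (hs : 0 < s) : Qs s ⊆ Bloch := fun f hf => by
  obtain ⟨hol, hf⟩ := mem_Qs_iff.1 hf
  set Q := ⨆ a ∈ 𝔻, ∫⁻ z, invariantDeriv f z ^ 2 * discWeight (phi a z) ^ s ∂hyperbolicMeasure
  refine mem_Bloch_of_setLIntegral_le (K := (4 / 3) ^ s * Q) hol one_le_two
    (ENNReal.mul_ne_top (by finiteness) hf.ne) fun b hb => ?_
  calc ∫⁻ z in phi b ⁻¹' ball 0 (1 / 2), invariantDeriv f z ^ (2 : ℝ) ∂hyperbolicMeasure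
      ≤ ∫⁻ z in phi b ⁻¹' ball 0 (1 / 2),
          (4 / 3) ^ s * (invariantDeriv f z ^ 2 * discWeight (phi b z) ^ s) ∂hyperbolicMeasure :=
        setLIntegral_mono' (measurable_phi b measurableSet_ball) fun z hz => by
          rw [mul_left_comm, ← ENNReal.mul_rpow_of_nonneg _ _ hs.le, ENNReal.rpow_two]
          exact le_mul_of_one_le_right' <| ENNReal.one_le_rpow
            (one_le_four_thirds_mul_discWeight hz) hs
    _ ≤ (4 / 3) ^ s *
          ∫⁻ z, invariantDeriv f z ^ 2 * discWeight (phi b z) ^ s ∂hyperbolicMeasure := by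
        rw [← lintegral_const_mul _ (by fun_prop)]
        exact setLIntegral_le_lintegral _ _
    _ ≤ (4 / 3) ^ s * Q := by
        gcongr
        exact le_iSup₂_of_le b hb le_rfl

lemma Besov_subset_Besov (hp : 1 ≤ p) (hpq : p ≤ q) : Besov p ⊆ Besov q := fun f hf => by
  obtain ⟨-, C, hC, bound⟩ := mem_Bloch_iff.1 (Besov_subset_Bloch hp hf)
  obtain ⟨hol, hf⟩ := (mem_Besov_iff (by linarith)).1 hf
  refine (mem_Besov_iff (by linarith)).2 ⟨hol, ?_⟩
  calc ∫⁻ z, invariantDeriv f z ^ q ∂hyperbolicMeasure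
      ≤ ∫⁻ z, C ^ (q - p) * invariantDeriv f z ^ p ∂hyperbolicMeasure :=
        lintegral_mono_ae <| ae_hyperbolicMeasure_mem_ball.mono fun z hz => by
          calc invariantDeriv f z ^ q = invariantDeriv f z ^ (q - p) * invariantDeriv f z ^ p := by
                rw [← ENNReal.rpow_add_of_nonneg _ _ (by linarith) (by linarith), sub_add_cancel]
            _ ≤ C ^ (q - p) * invariantDeriv f z ^ p := by
                gcongr
                exact bound z hz
    _ < ∞ := by
        rw [lintegral_const_mul _ (by fun_prop)]
        exact ENNReal.mul_lt_top (ENNReal.rpow_lt_top_of_nonneg (by linarith) hC) hf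

lemma Besov_subset_Qs_of_two_lt (hp : 2 < p) (hps : 1 - 2 / p < s) : Besov p ⊆ Qs s := by
  intro f hf
  obtain ⟨hol, hf⟩ := (mem_Besov_iff (by linarith)).1 hf
  set r := (p / 2).conjExponent
  have hpr : (p / 2).HolderConjugate r := .conjExponent (by linarith)
  have hsr : 1 < s * r := by
    have : r⁻¹ = 1 - 2 / p := by rw [← hpr.one_sub_inv, inv_div]
    rwa [← this, inv_lt_iff_one_lt_mul₀ hpr.symm.pos] at hps
  have weight := lintegral_discWeight_rpow_lt_top hsr
  refine mem_Qs_iff.2 ⟨hol, (iSup₂_le fun a ha => ?_).trans_lt (ENNReal.mul_lt_top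
    (ENNReal.rpow_lt_top_of_nonneg (by positivity : 0 ≤ 1 / (p / 2)) hf.ne)
    (ENNReal.rpow_lt_top_of_nonneg (one_div_nonneg.2 hpr.symm.nonneg) weight.ne))⟩
  calc ∫⁻ z, invariantDeriv f z ^ 2 * discWeight (phi a z) ^ s ∂hyperbolicMeasure
      ≤ (∫⁻ z, (invariantDeriv f z ^ 2) ^ (p / 2) ∂hyperbolicMeasure) ^ (1 / (p / 2)) *
          (∫⁻ z, (discWeight (phi a z) ^ s) ^ r ∂hyperbolicMeasure) ^ (1 / r) :=
        ENNReal.lintegral_mul_le_Lp_mul_Lq _ hpr (by fun_prop) (by fun_prop)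
    _ = (∫⁻ z, invariantDeriv f z ^ p ∂hyperbolicMeasure) ^ (1 / (p / 2)) *
          (∫⁻ z, discWeight z ^ (s * r) ∂hyperbolicMeasure) ^ (1 / r) := by
        rw [← lintegral_discWeight_phi_rpow ha]
        simp_rw [← ENNReal.rpow_two, ← ENNReal.rpow_mul, mul_div_cancel₀ p two_ne_zero]

lemma Besov_subset_Qs (hp : 1 ≤ p) (hs : 0 < s) (hps : 1 - 2 / p < s) : Besov p ⊆ Qs s := by
  rcases lt_or_ge 2 p with hp2 | hp2
  · exact Besov_subset_Qs_of_two_lt hp2 hps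
  · have exponent : 1 - 2 / (2 + s) < s := by
      rw [one_sub_div (by linarith), div_lt_iff₀ (by linarith)]
      nlinarith
    exact (Besov_subset_Besov hp (by linarith : p ≤ 2 + s)).trans
      (Besov_subset_Qs_of_two_lt (by linarith) exponent)

end Inclusions

section CompanionOperator

variable {f g : ℂ → ℂ} {z : ℂ} {s : ℝ}

lemma hasDerivAt_Ig (hg : HolOn g) (hf : HolOn f) (hz : z ∈ 𝔻) :
    HasDerivAt (Ig g f) (g z * deriv f z) z := by
  have hol : DifferentiableOn ℂ (fun w => g w * deriv f w) 𝔻 := hg.mul (hf.deriv isOpen_ball)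
  obtain ⟨G, hG⟩ := hol.isExactOn_ball
  have Ig_eq (w : ℂ) (hw : w ∈ 𝔻) : Ig g f w = G w - G 0 := by
    have segment (t : ℝ) (ht : t ∈ Icc (0 : ℝ) 1) : 0 + t • w ∈ 𝔻 := by
      rw [zero_add]
      exact (convex_ball 0 1).smul_mem_of_zero_mem (by simp) hw ht
    have cont : ContinuousOn (fun t : ℝ => g (0 + t • w) * deriv f (0 + t • w)) (Icc 0 1) :=
      hol.continuousOn.comp (by fun_prop) segment
    simpa [Ig] using intervalIntegral.integral_unitInterval_deriv_eq_sub
      (f' := fun w => g w * deriv f w) cont fun t ht => hG _ (segment t ht)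
  exact ((hG z hz).sub_const (G 0)).congr_of_eventuallyEq
    (eventuallyEq_of_mem (isOpen_ball.mem_nhds hz) Ig_eq)

lemma holOn_Ig (hg : HolOn g) (hf : HolOn f) : HolOn (Ig g f) := fun _ hz =>
  (hasDerivAt_Ig hg hf hz).differentiableAt.differentiableWithinAt

lemma invariantDeriv_Ig (hg : HolOn g) (hf : HolOn f) (hz : z ∈ 𝔻) :
    invariantDeriv (Ig g f) z = ‖g z‖ₑ * invariantDeriv f z := by
  rw [invariantDeriv, (hasDerivAt_Ig hg hf hz).deriv, enorm_mul, mul_left_comm, invariantDeriv]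

lemma Ig_mem_Qs (hg : g ∈ Hinf) (hf : f ∈ Qs s) : Ig g f ∈ Qs s := by
  obtain ⟨hol_g, M, hM⟩ := hg
  obtain ⟨hol_f, hf⟩ := mem_Qs_iff.1 hf
  refine mem_Qs_iff.2 ⟨holOn_Ig hol_g hol_f, lt_of_le_of_lt (iSup₂_le fun a ha => ?_)
    (ENNReal.mul_lt_top (by finiteness : ENNReal.ofReal M ^ 2 < ∞) hf)⟩
  calc ∫⁻ z, invariantDeriv (Ig g f) z ^ 2 * discWeight (phi a z) ^ s ∂hyperbolicMeasure
      ≤ ∫⁻ z, ENNReal.ofReal M ^ 2 *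
          (invariantDeriv f z ^ 2 * discWeight (phi a z) ^ s) ∂hyperbolicMeasure :=
        lintegral_mono_ae <| ae_hyperbolicMeasure_mem_ball.mono fun z hz => by
          rw [invariantDeriv_Ig hol_g hol_f hz, mul_pow, mul_assoc, ← ofReal_norm]
          gcongr
          exact hM z hz
    _ = ENNReal.ofReal M ^ 2 *
          ∫⁻ z, invariantDeriv f z ^ 2 * discWeight (phi a z) ^ s ∂hyperbolicMeasure :=
        lintegral_const_mul _ (by fun_prop)
    _ ≤ _ := by
        gcongr
        exact le_iSup₂_of_le a ha le_rfl

end CompanionOperator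

section MobiusSeries

variable {ι : Type*} {c b : ι → ℂ} {z : ℂ} {p : ℝ}

lemma differentiableOn_const_mul_phi (hb : ∀ i, b i ∈ 𝔻) (i : ι) :
    DifferentiableOn ℂ (fun z => c i * phi (b i) z) 𝔻 :=
  (holOn_phi (hb i)).const_mul (c i)

lemma norm_const_mul_phi_le (hb : ∀ i, b i ∈ 𝔻) (i : ι) (z : ℂ) (hz : z ∈ 𝔻) :
    ‖c i * phi (b i) z‖ ≤ ‖c i‖ := by
  rw [norm_mul]
  exact mul_le_of_le_one_right (norm_nonneg _) (mem_ball_zero_iff.1 (mapsTo_phi (hb i) hz)).le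

lemma holOn_tsum_phi (hc : Summable fun i => ‖c i‖) (hb : ∀ i, b i ∈ 𝔻) :
    HolOn fun z => ∑' i, c i * phi (b i) z :=
  Complex.differentiableOn_tsum_of_summable_norm hc (differentiableOn_const_mul_phi hb) isOpen_ball
    (norm_const_mul_phi_le hb)

lemma deriv_tsum_phi (hc : Summable fun i => ‖c i‖) (hb : ∀ i, b i ∈ 𝔻) (hz : z ∈ 𝔻) :
    deriv (fun z => ∑' i, c i * phi (b i) z) z = ∑' i, c i * deriv (phi (b i)) z := by
  rw [← (Complex.hasSum_deriv_of_summable_norm hc (differentiableOn_const_mul_phi hb) isOpen_ball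
    (norm_const_mul_phi_le hb) hz).tsum_eq]
  exact tsum_congr fun i => deriv_const_mul _ (hasDerivAt_phi (hb i) hz).differentiableAt

lemma invariantDeriv_tsum_phi_le (hc : Summable fun i => ‖c i‖) (hb : ∀ i, b i ∈ 𝔻)
    (hz : z ∈ 𝔻) : invariantDeriv (fun z => ∑' i, c i * phi (b i) z) z ≤
      ∑' i, ‖c i‖ₑ * discWeight (phi (b i) z) :=
  calc discWeight z * ‖deriv (fun z => ∑' i, c i * phi (b i) z) z‖ₑ
      ≤ discWeight z * ∑' i, ‖c i * deriv (phi (b i)) z‖ₑ := by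
        rw [deriv_tsum_phi hc hb hz]
        gcongr
        exact enorm_tsum_le_tsum_enorm
    _ = ∑' i, ‖c i‖ₑ * discWeight (phi (b i) z) := by
        simp_rw [← ENNReal.tsum_mul_left, enorm_mul, mul_left_comm (discWeight z),
          discWeight_mul_enorm_deriv_phi (hb _) hz]

lemma tsum_phi_mem_Besov [Countable ι] (hp : 1 < p) (hc : Summable fun i => ‖c i‖)
    (hb : ∀ i, b i ∈ 𝔻) : (fun z => ∑' i, c i * phi (b i) z) ∈ Besov p := by
  have sum_ne_top : ∑' i, ‖c i‖ₑ ≠ ∞ := by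
    simp_rw [← ofReal_norm]
    exact hc.tsum_ofReal_ne_top
  refine (mem_Besov_iff (by linarith)).2 ⟨holOn_tsum_phi hc hb, ?_⟩
  calc ∫⁻ z, invariantDeriv (fun z => ∑' i, c i * phi (b i) z) z ^ p ∂hyperbolicMeasure
      ≤ ∫⁻ z, (∑' i, ‖c i‖ₑ * discWeight (phi (b i) z)) ^ p ∂hyperbolicMeasure :=
        lintegral_mono_ae <| ae_hyperbolicMeasure_mem_ball.mono fun z hz => by
          gcongr
          exact invariantDeriv_tsum_phi_le hc hb hz
    _ ≤ (∑' i, ‖c i‖ₑ) ^ p * ∫⁻ z, discWeight z ^ p ∂hyperbolicMeasure :=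
        lintegral_rpow_tsum_mul_le (fun i => by fun_prop) hp.le fun i =>
          (lintegral_discWeight_phi_rpow (hb i) p).le
    _ < ∞ := ENNReal.mul_lt_top (ENNReal.rpow_lt_top_of_nonneg (by linarith) sum_ne_top)
        (lintegral_discWeight_rpow_lt_top hp)

end MobiusSeries

lemma mem_Hinf_of_mapsInto_Bloch {p : ℝ} {g : ℂ → ℂ} (hp : 1 < p) (hg : HolOn g)
    (h : MapsInto (Ig g) (Besov p) Bloch) : g ∈ Hinf := by
  refine ⟨hg, ?_⟩
  by_contra! unbounded
  choose b hb lt_norm using fun n : ℕ => unbounded n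
  let w (m n : ℕ) : ℂ := (1 - ‖b m‖ ^ 2 : ℝ) * (g (b m) * deriv (phi (b n)) (b m))
  have norm_w (m n : ℕ) : ‖w m n‖ = ‖g (b m)‖ * (1 - ‖phi (b n) (b m)‖ ^ 2) := by
    rw [← one_sub_norm_sq_mul_norm_deriv_phi (hb n) (hb m), norm_mul, norm_mul, Complex.norm_real,
      Real.norm_of_nonneg (one_sub_norm_sq_pos (hb m)).le, mul_left_comm]
  obtain ⟨C, hC⟩ : ∃ C, ∀ m n, ‖w m n‖ ≤ C := by
    refine exists_norm_le_of_forall_summable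
      (fun m => ⟨‖g (b m)‖, forall_mem_range.2 fun n => ?_⟩) fun c hc => ?_
    · rw [norm_w]
      exact mul_le_of_le_one_right (norm_nonneg _) (sub_le_self _ (by positivity))
    · have hf := tsum_phi_mem_Besov hp hc hb
      obtain ⟨-, M, hM⟩ := h _ hf
      refine ⟨M, fun m => (le_of_eq ?_).trans (hM (b m) (hb m))⟩
      rw [(hasDerivAt_Ig hg hf.1 (hb m)).deriv, deriv_tsum_phi hc hb (hb m), ← tsum_mul_left,
        ← Real.norm_of_nonneg (one_sub_norm_sq_pos (hb m)).le, ← Complex.norm_real, ← norm_mul,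
        ← tsum_mul_left]
      simp only [w, mul_left_comm (c _)]
  obtain ⟨m, hm⟩ := exists_nat_gt C
  have diagonal : ‖g (b m)‖ ≤ C := by simpa [norm_w, phi_self] using hC m m
  exact (hm.trans (lt_norm m)).not_ge diagonal

theorem stmt10_general (p s : ℝ) (g : ℂ → ℂ) (hg : HolOn g) (hp : 1 < p) (hs : 0 < s)
    (hps : 1 - 2 / p < s) : MapsInto (Ig g) (Besov p) (Qs s) ↔ g ∈ Hinf :=
  ⟨fun h => mem_Hinf_of_mapsInto_Bloch hp hg fun f hf => Qs_subset_Bloch hs (h f hf),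
    fun hg _ hf => Ig_mem_Qs hg (Besov_subset_Qs hp.le hs hps hf)⟩

/-- For `g` holomorphic on the unit disc and `(1 < p ≤ 2` and `0 < s ≤ 1)`
or `(2 < p < ∞` and `1 - 2/p < s ≤ 1)`: `I_g` maps `Bᵖ` into `Q_s` iff `g ∈ H^∞`. -/
theorem stmt10 (p s : ℝ) (g : ℂ → ℂ) (hg : HolOn g)
    (hps : (1 < p ∧ p ≤ 2 ∧ 0 < s ∧ s ≤ 1) ∨ (2 < p ∧ 1 - 2 / p < s ∧ s ≤ 1)) :
    MapsInto (Ig g) (Besov p) (Qs s) ↔ g ∈ Hinf := by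
  rcases hps with ⟨hp, hp2, hs, -⟩ | ⟨hp, hs, -⟩
  · exact stmt10_general p s g hg hp hs (by linarith [(one_le_div (by linarith)).2 hp2])
  · exact stmt10_general p s g hg (by linarith) (by linarith [(div_lt_one (by linarith)).2 hp]) hs
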